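/- Every Halin graph has treewidth exactly 3. -/

import Mathlib

open SimpleGraph

/-- A planar (straight-line) embedding of a graph in the plane: vertices are
mapped injectively to points, edges are drawn as straight segments (by Fáry's
theorem this is no loss of generality for simple planar graphs), distinct edges
meet only in common endpoints, and no vertex lies in the interior of an edge. -/
structure StraightEmbedding {V : Type} (G : SimpleGraph V) where
  pos : V → ℝ × ℝ
  inj : Function.Injective pos
  no_cross : ∀ a b c d : V, G.Adj a b → G.Adj c d → (s(a, b) : Sym2 V) ≠ s(c, d) →
    segment ℝ (pos a) (pos b) ∩ segment ℝ (pos c) (pos d) ⊆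
      pos '' (({a, b} : Set V) ∩ ({c, d} : Set V))
  vertex_off_edge : ∀ v a b : V, G.Adj a b → v ≠ a → v ≠ b →
    pos v ∉ segment ℝ (pos a) (pos b)

/-- A vertex lies on the outer (exterior) face of an embedding iff some ray
from it reaches infinity without crossing the drawing. -/
def OnOuterFace {V : Type} {G : SimpleGraph V} (emb : StraightEmbedding G) (v : V) : Prop :=
  ∃ d : ℝ × ℝ, d ≠ 0 ∧ ∀ t : ℝ, 0 < t → ∀ a b : V, G.Adj a b →
    emb.pos v + t • d ∉ segment ℝ (emb.pos a) (emb.pos b)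

/-- `IsKOuterplanar k V G`: `G` admits a `k`-outerplanar embedding. A
`1`-outerplanar embedding is planar with all vertices on the outer face; a
`k`-outerplanar embedding (`k ≥ 2`) is planar such that deleting the vertices
on the outer face leaves a `(k-1)`-outerplanar graph. -/
def IsKOuterplanar : ℕ → ∀ (V : Type), SimpleGraph V → Prop
  | 0, _, _ => False
  | 1, _, G => ∃ emb : StraightEmbedding G, ∀ v, OnOuterFace emb v
  | (k + 2), _, G => ∃ emb : StraightEmbedding G,
      IsKOuterplanar (k + 1) _ (G.induce {v | ¬ OnOuterFace emb v})

/-- Degree of a vertex (cardinality of its neighbour set). -/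
noncomputable def degB {V : Type} (G : SimpleGraph V) (v : V) : ℕ :=
  (G.neighborSet v).ncard

/-- `G` is a Halin graph: it is the (planar) union of a tree `T` on at least 4
vertices without degree-2 vertices and a cycle `C` through all leaves of `T`. -/
def IsHalin {V : Type} (G : SimpleGraph V) : Prop :=
  ∃ T C : SimpleGraph V,
    T.IsTree ∧
    4 ≤ Nat.card V ∧
    (∀ v, degB T v ≠ 2) ∧
    (∀ v, degB T v = 1 → degB C v = 2) ∧
    (∀ v, degB T v ≠ 1 → degB C v = 0) ∧
    (C.induce {v | degB T v = 1}).Connected ∧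
    (∀ a b, ¬ (T.Adj a b ∧ C.Adj a b)) ∧
    G = T ⊔ C ∧
    Nonempty (StraightEmbedding G)

/-- A tree decomposition of `G` with index (node) type `ι`. -/
structure TreeDecomp {V : Type} (G : SimpleGraph V) (ι : Type) where
  tree : SimpleGraph ι
  isTree : tree.IsTree
  bag : ι → Set V
  mem_bag : ∀ v : V, ∃ t, v ∈ bag t
  edge_bag : ∀ a b : V, G.Adj a b → ∃ t, a ∈ bag t ∧ b ∈ bag t
  coherence : ∀ v : V, (tree.induce {t | v ∈ bag t}).Connected

/-- `G` has treewidth at most `k`: some tree decomposition has all bags of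
size at most `k + 1`. -/
def TreewidthLE {V : Type} (G : SimpleGraph V) (k : ℕ) : Prop :=
  ∃ (ι : Type) (D : TreeDecomp G ι), ∀ t, (D.bag t).ncard ≤ k + 1


namespace HalinTW

/-- The height of the line through `a` and `b` at abscissa `x`. -/
noncomputable def lineAt (a b : ℝ × ℝ) (x : ℝ) : ℝ :=
  a.2 + (b.2 - a.2) / (b.1 - a.1) * (x - a.1)

/-- `z` is strictly between `x` and `y`. -/
def Btw (x y z : ℝ) : Prop := (x < z ∧ z < y) ∨ (y < z ∧ z < x)

open Classical in
/-- Parity of crossings of the upward vertical ray from `p` with segment `ab`. -/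
noncomputable def cn (p a b : ℝ × ℝ) : ZMod 2 :=
  if Btw a.1 b.1 p.1 ∧ p.2 < lineAt a b p.1 then 1 else 0

open Classical in
/-- Indicator that `a` lies above the segment `pq`. -/
noncomputable def gg (p q a : ℝ × ℝ) : ZMod 2 :=
  if Btw p.1 q.1 a.1 ∧ lineAt p q a.1 < a.2 then 1 else 0

lemma lineAt_symm {a b : ℝ × ℝ} (h : a.1 ≠ b.1) (x : ℝ) : lineAt a b x = lineAt b a x := by
  unfold lineAt
  have h1 : b.1 - a.1 ≠ 0 := sub_ne_zero.2 h.symm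
  have h2 : a.1 - b.1 ≠ 0 := sub_ne_zero.2 h
  field_simp
  ring

lemma lineAt_left (a b : ℝ × ℝ) : lineAt a b a.1 = a.2 := by simp [lineAt]

lemma lineAt_right {a b : ℝ × ℝ} (h : a.1 ≠ b.1) : lineAt a b b.1 = b.2 := by
  rw [lineAt_symm h, lineAt_left]

lemma btw_symm (x y z : ℝ) : Btw x y z ↔ Btw y x z := by
  unfold Btw; tauto

lemma cn_symm {p a b : ℝ × ℝ} (h : a.1 ≠ b.1) : cn p a b = cn p b a := by
  unfold cn; rw [lineAt_symm h, btw_symm]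

lemma gg_symm {p q a : ℝ × ℝ} (h : p.1 ≠ q.1) : gg p q a = gg q p a := by
  unfold gg; rw [lineAt_symm h, btw_symm]

lemma mem_seg_lineAt {a b : ℝ × ℝ} {x : ℝ} (hab : a.1 < b.1) (h1 : a.1 ≤ x) (h2 : x ≤ b.1) :
    (x, lineAt a b x) ∈ segment ℝ a b := by
  rw [segment_eq_image']
  have h : b.1 - a.1 ≠ 0 := (sub_pos.2 hab).ne'
  refine ⟨(x - a.1) / (b.1 - a.1), ⟨by apply div_nonneg <;> linarith, ?_⟩, ?_⟩
  · rw [div_le_one (sub_pos.2 hab)]; linarith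
  · ext
    · simp; field_simp; ring
    · simp [lineAt]; field_simp

lemma affine_sign {k m x y : ℝ} (hxy : x ≤ y)
    (h : ∀ z, x ≤ z → z ≤ y → k * z + m ≠ 0) : 0 < k * x + m ↔ 0 < k * y + m := by
  have hc : ContinuousOn (fun z => k * z + m) (Set.Icc x y) := by fun_prop
  have hx := h x le_rfl hxy
  have hy := h y hxy le_rfl
  constructor
  · intro h0
    by_contra h1
    have h2 : k * y + m ≤ 0 := not_lt.1 h1
    obtain ⟨z, hz, hz'⟩ := intermediate_value_Icc' hxy hc ⟨h2, h0.le⟩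
    exact h z hz.1 hz.2 hz'
  · intro h0
    by_contra h1
    have h2 : k * x + m ≤ 0 := not_lt.1 h1
    obtain ⟨z, hz, hz'⟩ := intermediate_value_Icc hxy hc ⟨h2, h0.le⟩
    exact h z hz.1 hz.2 hz'

open Classical in
lemma cross_order (p q a b : ℝ) (P Q A B : Prop) (hpq : p < q) (hab : a < b)
    (h1 : a ≠ p) (h2 : a ≠ q) (h3 : b ≠ p) (h4 : b ≠ q)
    (s1 : p ≤ q → p ≤ p → a ≤ p → q ≤ q → q ≤ b → (P ↔ Q))
    (s2 : p ≤ b → p ≤ p → a ≤ p → b ≤ q → b ≤ b → (P ↔ B))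
    (s3 : a ≤ q → p ≤ a → a ≤ a → q ≤ q → q ≤ b → (A ↔ Q))
    (s4 : a ≤ b → p ≤ a → a ≤ a → b ≤ q → b ≤ b → (A ↔ B)) :
    ((if (a < p ∧ p < b ∨ b < p ∧ p < a) ∧ P then 1 else 0) +
      if (a < q ∧ q < b ∨ b < q ∧ q < a) ∧ Q then 1 else 0 : ZMod 2) =
    (if (p < a ∧ a < q ∨ q < a ∧ a < p) ∧ A then 1 else 0) +
      if (p < b ∧ b < q ∨ q < b ∧ b < p) ∧ B then 1 else 0 := by
  have two : (1 : ZMod 2) + 1 = 0 := by decide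
  simp only [le_refl, true_imp_iff, hpq.le, hab.le] at s1 s2 s3 s4
  rcases lt_or_gt_of_ne h1 with g1 | g1
  · rcases lt_or_gt_of_ne h3 with g3 | g3
    · rw [if_neg, if_neg, if_neg, if_neg]
      all_goals
        rintro ⟨⟨x, y⟩ | ⟨x, y⟩, -⟩ <;> linarith
    · rcases lt_or_gt_of_ne h4 with g4 | g4
      · rw [if_congr (and_iff_right (Or.inl ⟨g1, g3⟩)) rfl rfl, if_neg (c := _ ∧ Q), if_neg (c := _ ∧ A),
          if_congr (and_iff_right (Or.inl ⟨g3, g4⟩)) rfl rfl, if_congr (s2 g3.le g1.le g4.le) rfl rfl,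
          add_comm]
        all_goals
          rintro ⟨⟨x, y⟩ | ⟨x, y⟩, -⟩ <;> linarith
      · rw [if_congr (and_iff_right (Or.inl ⟨g1, g3⟩)) rfl rfl,
          if_congr (and_iff_right (Or.inl ⟨by linarith, g4⟩)) rfl rfl, if_neg (c := _ ∧ A),
          if_neg (c := _ ∧ B), if_congr (s1 g1.le g4.le) rfl rfl]
        · split_ifs
          · exact two
          · rfl
        all_goals
          rintro ⟨⟨x, y⟩ | ⟨x, y⟩, -⟩ <;> linarith
  · rcases lt_or_gt_of_ne h2 with g2 | g2
    · rcases lt_or_gt_of_ne h4 with g4 | g4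
      · rw [if_neg (c := _ ∧ P), if_neg (c := _ ∧ Q), if_congr (and_iff_right (Or.inl ⟨g1, g2⟩)) rfl rfl,
          if_congr (and_iff_right (Or.inl ⟨by linarith, g4⟩)) rfl rfl, if_congr (s4 g1.le g4.le) rfl rfl]
        · split_ifs
          · exact two.symm
          · rfl
        all_goals
          rintro ⟨⟨x, y⟩ | ⟨x, y⟩, -⟩ <;> linarith
      · rw [if_neg (c := _ ∧ P), if_neg (c := _ ∧ B), if_congr (and_iff_right (Or.inl ⟨g2, g4⟩)) rfl rfl,
          if_congr (and_iff_right (Or.inl ⟨g1, g2⟩)) rfl rfl, if_congr (s3 g2.le g1.le g4.le) rfl rfl,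
          add_comm]
        all_goals
          rintro ⟨⟨x, y⟩ | ⟨x, y⟩, -⟩ <;> linarith
    · rw [if_neg, if_neg, if_neg, if_neg]
      all_goals
        rintro ⟨⟨x, y⟩ | ⟨x, y⟩, -⟩ <;> linarith

lemma cross_aux {p q a b : ℝ × ℝ} (hpq : p.1 < q.1) (hab : a.1 < b.1)
    (h1 : a.1 ≠ p.1) (h2 : a.1 ≠ q.1) (h3 : b.1 ≠ p.1) (h4 : b.1 ≠ q.1)
    (hd : Disjoint (segment ℝ p q) (segment ℝ a b)) :
    cn p a b + cn q a b = gg p q a + gg p q b := by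
  have key : ∀ z, p.1 ≤ z → z ≤ q.1 → a.1 ≤ z → z ≤ b.1 → lineAt a b z - lineAt p q z ≠ 0 := by
    intro z z1 z2 z3 z4 h0
    have e : lineAt a b z = lineAt p q z := by linarith
    have m1 := mem_seg_lineAt hpq z1 z2
    have m2 := mem_seg_lineAt hab z3 z4
    rw [e] at m2
    exact Set.disjoint_left.1 hd m1 m2
  obtain ⟨k, m, hkm⟩ : ∃ k m : ℝ, ∀ z, lineAt a b z - lineAt p q z = k * z + m := by
    refine ⟨(b.2 - a.2) / (b.1 - a.1) - (q.2 - p.2) / (q.1 - p.1),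
      a.2 - (b.2 - a.2) / (b.1 - a.1) * a.1 - (p.2 - (q.2 - p.2) / (q.1 - p.1) * p.1), ?_⟩
    intro z; unfold lineAt; ring
  have sgn : ∀ x y, x ≤ y → p.1 ≤ x → a.1 ≤ x → y ≤ q.1 → y ≤ b.1 →
      (0 < lineAt a b x - lineAt p q x ↔ 0 < lineAt a b y - lineAt p q y) := by
    intro x y hxy x1 x2 y1 y2
    rw [hkm, hkm]
    apply affine_sign hxy
    intro z z1 z2
    rw [← hkm]
    exact key z (by linarith) (by linarith) (by linarith) (by linarith)
  have ep : p.2 < lineAt a b p.1 ↔ 0 < lineAt a b p.1 - lineAt p q p.1 := by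
    rw [lineAt_left, sub_pos]
  have eq' : q.2 < lineAt a b q.1 ↔ 0 < lineAt a b q.1 - lineAt p q q.1 := by
    rw [lineAt_right hpq.ne, sub_pos]
  have ea : lineAt p q a.1 < a.2 ↔ 0 < lineAt a b a.1 - lineAt p q a.1 := by
    rw [lineAt_left, sub_pos]
  have eb : lineAt p q b.1 < b.2 ↔ 0 < lineAt a b b.1 - lineAt p q b.1 := by
    rw [lineAt_right hab.ne, sub_pos]
  unfold cn gg Btw
  simp only [ep, eq', ea, eb]
  have s1 := sgn p.1 q.1
  have s2 := sgn p.1 b.1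
  have s3 := sgn a.1 q.1
  have s4 := sgn a.1 b.1
  have two : (1 : ZMod 2) + 1 = 0 := by decide
  generalize lineAt a b p.1 - lineAt p q p.1 = dp at *
  generalize lineAt a b q.1 - lineAt p q q.1 = dq at *
  generalize lineAt a b a.1 - lineAt p q a.1 = da at *
  generalize lineAt a b b.1 - lineAt p q b.1 = db at *
  clear ep eq' ea eb sgn key hkm hd
  exact cross_order p.1 q.1 a.1 b.1 _ _ _ _ hpq hab h1 h2 h3 h4 s1 s2 s3 s4

lemma cross_eq {p q a b : ℝ × ℝ} (hpq : p.1 ≠ q.1) (hab : a.1 ≠ b.1)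
    (h1 : a.1 ≠ p.1) (h2 : a.1 ≠ q.1) (h3 : b.1 ≠ p.1) (h4 : b.1 ≠ q.1)
    (hd : Disjoint (segment ℝ p q) (segment ℝ a b)) :
    cn p a b + cn q a b = gg p q a + gg p q b := by
  rcases lt_or_gt_of_ne hpq with h | h <;> rcases lt_or_gt_of_ne hab with h' | h'
  · exact cross_aux h h' h1 h2 h3 h4 hd
  · rw [cn_symm hab, cn_symm (p := q) hab, cross_aux h h' h3 h4 h1 h2 (by rwa [segment_symm ℝ b a]),
      add_comm]
  · rw [gg_symm hpq, gg_symm (a := b) hpq, add_comm,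
      cross_aux h h' h2 h1 h4 h3 (by rwa [segment_symm ℝ q p])]
  · rw [gg_symm hpq, gg_symm (a := b) hpq, cn_symm hab, cn_symm (p := q) hab, add_comm,
      cross_aux h h' h4 h3 h2 h1 (by rwa [segment_symm ℝ q p, segment_symm ℝ b a]), add_comm]

end HalinTW

namespace HalinTW

/-- Total crossing parity of the upward ray from `p` with a drawn walk. -/
noncomputable def cw {V : Type} {G : SimpleGraph V} (pos : V → ℝ × ℝ) (p : ℝ × ℝ) :
    ∀ {a b : V}, G.Walk a b → ZMod 2
  | _, _, .nil => 0
  | a, _, .cons (v := c) _ w => cn p (pos a) (pos c) + cw pos p w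

lemma cw_eq {V : Type} {G : SimpleGraph V} (pos : V → ℝ × ℝ)
    (hx : ∀ a b, (pos a).1 = (pos b).1 → a = b) (p q : ℝ × ℝ) (hpq : p.1 ≠ q.1) {a b : V}
    (w : G.Walk a b) (h1 : ∀ z ∈ w.support, (pos z).1 ≠ p.1) (h2 : ∀ z ∈ w.support, (pos z).1 ≠ q.1)
    (hd : ∀ c d, G.Adj c d → c ∈ w.support → d ∈ w.support →
      Disjoint (segment ℝ p q) (segment ℝ (pos c) (pos d))) :
    cw pos p w + cw pos q w = gg p q (pos a) + gg p q (pos b) := by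
  induction w with
  | nil => simp [cw, CharTwo.add_self_eq_zero]
  | @cons a c b h w ih =>
    have ih' := ih (fun z hz => h1 z (by simp [hz])) (fun z hz => h2 z (by simp [hz]))
      (fun x y hxy hx' hy' => hd x y hxy (by simp [hx']) (by simp [hy']))
    have hc := cross_eq hpq (a := pos a) (b := pos c) (fun e => h.ne (hx _ _ e))
      (h1 a (by simp)) (h2 a (by simp)) (h1 c (by simp)) (h2 c (by simp))
      (hd a c h (by simp) (by simp))
    simp only [cw]
    have e : gg p q (pos c) + gg p q (pos c) = 0 := CharTwo.add_self_eq_zero _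
    linear_combination hc + ih' + e

lemma theta_aux {V : Type} [Finite V] {G : SimpleGraph V} (emb : StraightEmbedding G)
    (hx : ∀ a b, (emb.pos a).1 = (emb.pos b).1 → a = b) (u v y : V) (n : Fin 3 → V)
    (hu : ∀ i, G.Adj u (n i)) (R : ∀ i, G.Walk (n i) v) (hR : ∀ i, u ∉ (R i).support)
    (Q : ∀ i, G.Walk (n i) y)
    (hQ : ∀ i j, i ≠ j → ∀ z ∈ (Q i).support, z ≠ u ∧ z ∉ (R j).support) : False := by
  classical
  set pos := emb.pos with hpos
  have hnR : ∀ i j, i ≠ j → n i ∉ (R j).support := fun i j h => (hQ i j h _ (by simp)).2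
  -- small epsilon
  obtain ⟨ε, hε, hεlt⟩ : ∃ ε : ℝ, 0 < ε ∧ ∀ z, z ≠ u → ε < |(pos z).1 - (pos u).1| := by
    have hfin : (Set.univ : Set V).Finite := Set.finite_univ
    have : ∀ z, ∃ e : ℝ, 0 < e ∧ (z ≠ u → e < |(pos z).1 - (pos u).1|) := by
      intro z
      by_cases h : z = u
      · exact ⟨1, one_pos, fun h' => absurd h h'⟩
      · have : 0 < |(pos z).1 - (pos u).1| := abs_pos.2 (sub_ne_zero.2 fun e => h (hx _ _ e))
        exact ⟨_, half_pos this, fun _ => half_lt_self this⟩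
    choose e he he' using this
    have : Nonempty V := ⟨u⟩
    obtain ⟨z0, hz0⟩ := Finite.exists_min e
    exact ⟨e z0, he z0, fun z hz => (hz0 z).trans_lt (he' z hz)⟩
  have hΔ : ∀ i, (pos (n i)).1 - (pos u).1 ≠ 0 := fun i => sub_ne_zero.2 fun e => (hu i).ne' (hx _ _ e)
  let s : Fin 3 → ℝ := fun i => ε / |(pos (n i)).1 - (pos u).1|
  have hs0 : ∀ i, 0 < s i := fun i => div_pos hε (abs_pos.2 (hΔ i))
  have hs1 : ∀ i, s i < 1 := fun i => (div_lt_one (abs_pos.2 (hΔ i))).2 (hεlt _ (hu i).ne')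
  let P : Fin 3 → ℝ × ℝ := fun i => pos u + s i • (pos (n i) - pos u)
  have hP1 : ∀ i, (P i).1 = (pos u).1 + s i * ((pos (n i)).1 - (pos u).1) := fun i => by simp [P]
  have hP2 : ∀ i, (P i).2 = (pos u).2 + s i * ((pos (n i)).2 - (pos u).2) := fun i => by simp [P]
  have hPpos : ∀ i, (pos u).1 < (pos (n i)).1 → (P i).1 = (pos u).1 + ε := by
    intro i h
    rw [hP1]; simp only [s]
    rw [abs_of_pos (sub_pos.2 h)]
    field_simp [hΔ i]
  have hPneg : ∀ i, (pos (n i)).1 < (pos u).1 → (P i).1 = (pos u).1 - ε := by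
    intro i h
    rw [hP1]; simp only [s]
    rw [abs_of_neg (sub_neg.2 h)]
    have := hΔ i
    have h3 : -((pos (n i)).1 - (pos u).1) ≠ 0 := neg_ne_zero.2 this
    rw [div_mul_eq_mul_div, mul_comm, ← div_mul_eq_mul_div, div_neg, div_self this]; ring
  have hside : ∀ i, (pos u).1 < (pos (n i)).1 ∨ (pos (n i)).1 < (pos u).1 := by
    intro i
    rcases lt_trichotomy (pos u).1 (pos (n i)).1 with h | h | h
    · exact Or.inl h
    · exact absurd (by rw [h]; ring) (hΔ i)
    · exact Or.inr h
  have hPabs : ∀ i, |(P i).1 - (pos u).1| = ε := by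
    intro i
    rcases hside i with h | h
    · rw [hPpos i h]; simp [hε.le]
    · rw [hPneg i h]; simp [hε.le]
  have hPu : ∀ i, (P i).1 ≠ (pos u).1 := by
    intro i h
    have := hPabs i
    rw [h] at this; simp at this; linarith
  have hPz : ∀ i z, (pos z).1 ≠ (P i).1 := by
    intro i z h
    by_cases hz : z = u
    · subst hz; exact hPu i h.symm
    · have := hεlt z hz
      rw [h, hPabs] at this
      exact lt_irrefl _ this
  have hPseg : ∀ i, P i ∈ segment ℝ (pos u) (pos (n i)) := by
    intro i
    rw [segment_eq_image']
    exact ⟨s i, ⟨(hs0 i).le, (hs1 i).le⟩, rfl⟩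
  have hsub1 : ∀ i, segment ℝ (P i) (pos u) ⊆ segment ℝ (pos u) (pos (n i)) := fun i =>
    (convex_segment _ _).segment_subset (hPseg i) (left_mem_segment ℝ _ _)
  have hsub2 : ∀ i, segment ℝ (P i) (pos (n i)) ⊆ segment ℝ (pos u) (pos (n i)) := fun i =>
    (convex_segment _ _).segment_subset (hPseg i) (right_mem_segment ℝ _ _)
  have hunot : ∀ i, pos u ∉ segment ℝ (P i) (pos (n i)) := by
    intro i h
    rw [segment_eq_image'] at h
    obtain ⟨t, ⟨t0, t1⟩, ht⟩ := h
    have h1 := congrArg Prod.fst ht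
    simp only [Prod.fst_add, Prod.smul_fst, Prod.fst_sub, smul_eq_mul, hP1] at h1
    have h2 : (s i + t * (1 - s i)) * ((pos (n i)).1 - (pos u).1) = 0 := by linear_combination h1
    rcases mul_eq_zero.1 h2 with h3 | h3
    · have := hs0 i
      have := mul_nonneg t0 (sub_nonneg.2 (hs1 i).le)
      linarith
    · exact hΔ i h3
  -- edges avoiding `n i` meet the edge `u (n i)` only at `u`
  have hmeet : ∀ i c d, G.Adj c d → c ≠ n i → d ≠ n i → ∀ x ∈ segment ℝ (pos u) (pos (n i)),
      x ∈ segment ℝ (pos c) (pos d) → x = pos u ∧ (u = c ∨ u = d) := by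
    intro i c d hcd hc hd x hx1 hx2
    obtain ⟨z, ⟨hz1, hz2⟩, hz3⟩ := emb.no_cross u (n i) c d (hu i) hcd (by
      intro e
      rw [Sym2.eq_iff] at e
      rcases e with ⟨_, e⟩ | ⟨_, e⟩
      · exact hd e.symm
      · exact hc e.symm) ⟨hx1, hx2⟩
    simp only [Set.mem_insert_iff, Set.mem_singleton_iff] at hz1 hz2
    rcases hz1 with rfl | rfl
    · exact ⟨hz3.symm, hz2⟩
    · rcases hz2 with h | h
      · exact absurd h.symm hc
      · exact absurd h.symm hd
  have hggu : ∀ i z, z ≠ u → gg (P i) (pos u) (pos z) = 0 := by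
    intro i z hz
    unfold gg
    rw [if_neg]
    rintro ⟨h, -⟩
    have h1 := hεlt z hz
    have h2 := hPabs i
    rcases h with ⟨h, h'⟩ | ⟨h, h'⟩
    · rw [abs_of_neg (by linarith)] at h1 h2; linarith
    · rw [abs_of_pos (by linarith)] at h1 h2; linarith
  have hRu : ∀ i j, i ≠ j → cw pos (P i) (R j) = cw pos (pos u) (R j) := by
    intro i j hij
    have hne : ∀ z ∈ (R j).support, z ≠ u := fun z hz e => hR j (e ▸ hz)
    have := cw_eq pos hx (P i) (pos u) (hPu i) (R j) (fun z _ => hPz i z)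
      (fun z hz e => hne z hz (hx _ _ e)) (by
        intro c d hcd hc hd
        rw [Set.disjoint_left]
        intro x hx1 hx2
        rcases (hmeet i c d hcd (fun e => hnR i j hij (e ▸ hc)) (fun e => hnR i j hij (e ▸ hd)) x
          (hsub1 i hx1) hx2).2 with e | e
        · exact hne c hc e.symm
        · exact hne d hd e.symm)
    rw [hggu i _ (hne _ (by simp)), hggu i _ (hne _ (by simp)), add_zero] at this
    exact CharTwo.add_eq_zero.1 this
  let W : ∀ i, G.Walk u v := fun i => Walk.cons (hu i) (R i)
  have hW : ∀ i p, cw pos p (W i) = cn p (pos u) (pos (n i)) + cw pos p (R i) := fun i p => rfl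
  have hWs : ∀ i z, z ∈ (W i).support ↔ z = u ∨ z ∈ (R i).support := by
    intro i z; simp [W]
  -- moving inside the plane
  have hstep1 : ∀ i j k, i ≠ j → i ≠ k →
      cw pos (P i) (W j) + cw pos (P i) (W k) = cw pos (pos (n i)) (W j) + cw pos (pos (n i)) (W k) := by
    have key : ∀ i j, i ≠ j → cw pos (P i) (W j) + cw pos (pos (n i)) (W j) =
        gg (P i) (pos (n i)) (pos u) + gg (P i) (pos (n i)) (pos v) := by
      intro i j hij
      have hni : ∀ z ∈ (W j).support, z ≠ n i := by
        intro z hz e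
        subst e
        rcases (hWs j _).1 hz with e | e
        · exact (hu i).ne' e
        · exact hnR i j hij e
      refine cw_eq pos hx (P i) (pos (n i)) (hPz i _).symm (W j) (fun z _ => hPz i z)
        (fun z hz e => hni z hz (hx _ _ e)) ?_
      intro c d hcd hc hd
      rw [Set.disjoint_left]
      intro x hx1 hx2
      have := (hmeet i c d hcd (hni c hc) (hni d hd) x (hsub2 i hx1) hx2).1
      subst this
      exact hunot i hx1
    intro i j k hij hik
    have h1 := key i j hij
    have h2 := key i k hik
    have h3 : (2 : ZMod 2) = 0 := CharTwo.two_eq_zero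
    linear_combination h1 - h2 + (cw pos (P i) (W k) - cw pos (pos (n i)) (W j)) * h3
  have hstep2 : ∀ j k a (q : G.Walk a y), (∀ z ∈ q.support, z ∉ (W j).support ∧ z ∉ (W k).support) →
      cw pos (pos a) (W j) + cw pos (pos a) (W k) = cw pos (pos y) (W j) + cw pos (pos y) (W k) := by
    intro j k a q
    have key : ∀ j a b, G.Adj a b → a ∉ (W j).support → b ∉ (W j).support →
        cw pos (pos a) (W j) + cw pos (pos b) (W j) =
        gg (pos a) (pos b) (pos u) + gg (pos a) (pos b) (pos v) := by
      intro j a b hab ha hb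
      refine cw_eq pos hx _ _ (fun e => hab.ne (hx _ _ e)) (W j)
        (fun z hz e => ha ((hx _ _ e) ▸ hz)) (fun z hz e => hb ((hx _ _ e) ▸ hz)) ?_
      intro c d hcd hc hd
      have n1 : a ≠ c := fun e => ha (e ▸ hc)
      have n2 : a ≠ d := fun e => ha (e ▸ hd)
      have n3 : b ≠ c := fun e => hb (e ▸ hc)
      have n4 : b ≠ d := fun e => hb (e ▸ hd)
      rw [Set.disjoint_left]
      intro x hx1 hx2
      obtain ⟨z, ⟨hz1, hz2⟩, hz3⟩ := emb.no_cross a b c d hab hcd (by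
        intro e
        rw [Sym2.eq_iff] at e
        rcases e with ⟨e, _⟩ | ⟨e, _⟩
        · exact n1 e
        · exact n2 e) ⟨hx1, hx2⟩
      simp only [Set.mem_insert_iff, Set.mem_singleton_iff] at hz1 hz2
      rcases hz1 with rfl | rfl <;> rcases hz2 with h | h <;> contradiction
    induction q with
    | nil => intro _; rfl
    | @cons a b c h q ih =>
      intro hq
      rw [← ih Q hQ (fun z hz => hq z (by simp [hz]))]
      have h1 := key j a b h (hq a (by simp)).1 (hq b (by simp)).1
      have h2 := key k a b h (hq a (by simp)).2 (hq b (by simp)).2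
      have h3 : (2 : ZMod 2) = 0 := CharTwo.two_eq_zero
      linear_combination h1 - h2 + (cw pos (pos a) (W k) - cw pos (pos b) (W j)) * h3
  have htot : ∀ i j k, i ≠ j → i ≠ k →
      cn (P i) (pos u) (pos (n j)) + cw pos (pos u) (R j) +
        (cn (P i) (pos u) (pos (n k)) + cw pos (pos u) (R k)) =
      cw pos (pos y) (W j) + cw pos (pos y) (W k) := by
    intro i j k hij hik
    rw [← hRu i j hij, ← hRu i k hik, ← hW, ← hW, hstep1 i j k hij hik]
    apply hstep2 j k _ (Q i)
    intro z hz
    rw [hWs, hWs]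
    exact ⟨not_or.2 (hQ i j hij z hz), not_or.2 (hQ i k hik z hz)⟩
  -- local analysis
  have hline : ∀ i, lineAt (pos u) (pos (n i)) (P i).1 = (P i).2 := by
    intro i
    unfold lineAt
    rw [hP1, hP2]
    have := hΔ i
    field_simp
    ring
  have hPne : ∀ i j, i ≠ j → P i ≠ P j := by
    intro i j hij e
    have h1 := hPseg i
    have h2 := hPseg j
    rw [← e] at h2
    have h3 : n j ≠ n i := fun e => hnR i j hij (by rw [← e]; simp)
    have := (hmeet i u (n j) (hu j) (hu i).ne h3 _ h1 h2).1
    exact hPu i (by rw [this])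
  have hin : ∀ i, Btw (pos u).1 (pos (n i)).1 (P i).1 := by
    intro i
    have h1 := hεlt _ (hu i).ne'
    rcases hside i with h | h
    · left; rw [abs_of_pos (by linarith)] at h1; rw [hPpos i h]; constructor <;> linarith
    · right; rw [abs_of_neg (by linarith)] at h1; rw [hPneg i h]; constructor <;> linarith
  have hsame : ∀ i j, i ≠ j → (P i).1 = (P j).1 →
      cn (P i) (pos u) (pos (n j)) + cn (P j) (pos u) (pos (n i)) = 1 := by
    intro i j hij e
    have hi := hin i
    have hj := hin j
    unfold cn
    rw [e] at hi ⊢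
    rw [hline j, ← e, hline i, e]
    simp only [hi, hj, true_and]
    rcases lt_trichotomy (P i).2 (P j).2 with h | h | h
    · simp [h, h.le]
    · exact absurd (Prod.ext e h) (hPne i j hij)
    · simp [h, h.le]
  have hopp1 : ∀ i j, (pos u).1 < (pos (n i)).1 → (pos (n j)).1 < (pos u).1 →
      cn (P i) (pos u) (pos (n j)) = 0 ∧ cn (P j) (pos u) (pos (n i)) = 0 := by
    intro i j h1 h2
    have e1 := hPpos i h1
    have e2 := hPneg j h2
    constructor
    · unfold cn; rw [if_neg]; rintro ⟨h | h, -⟩ <;> linarith [h.1, h.2]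
    · unfold cn; rw [if_neg]; rintro ⟨h | h, -⟩ <;> linarith [h.1, h.2]
  have hpp : ∀ i j, i ≠ j → (pos u).1 < (pos (n i)).1 → (pos u).1 < (pos (n j)).1 →
      cn (P i) (pos u) (pos (n j)) + cn (P j) (pos u) (pos (n i)) = 1 := fun i j hij h1 h2 =>
    hsame i j hij (by rw [hPpos i h1, hPpos j h2])
  have hnn : ∀ i j, i ≠ j → (pos (n i)).1 < (pos u).1 → (pos (n j)).1 < (pos u).1 →
      cn (P i) (pos u) (pos (n j)) + cn (P j) (pos u) (pos (n i)) = 1 := fun i j hij h1 h2 =>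
    hsame i j hij (by rw [hPneg i h1, hPneg j h2])
  have hpn : ∀ i j, (pos u).1 < (pos (n i)).1 → (pos (n j)).1 < (pos u).1 →
      cn (P i) (pos u) (pos (n j)) + cn (P j) (pos u) (pos (n i)) = 0 := fun i j h1 h2 => by
    rw [(hopp1 i j h1 h2).1, (hopp1 i j h1 h2).2, add_zero]
  have hnp : ∀ i j, (pos (n i)).1 < (pos u).1 → (pos u).1 < (pos (n j)).1 →
      cn (P i) (pos u) (pos (n j)) + cn (P j) (pos u) (pos (n i)) = 0 := fun i j h1 h2 => by
    rw [(hopp1 j i h2 h1).1, (hopp1 j i h2 h1).2, add_zero]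
  have T0 := htot 0 1 2 (by decide) (by decide)
  have T1 := htot 1 0 2 (by decide) (by decide)
  have T2 := htot 2 0 1 (by decide) (by decide)
  have h3 : (2 : ZMod 2) = 0 := CharTwo.two_eq_zero
  have hsum : (cn (P 0) (pos u) (pos (n 1)) + cn (P 1) (pos u) (pos (n 0))) +
      (cn (P 0) (pos u) (pos (n 2)) + cn (P 2) (pos u) (pos (n 0))) +
      (cn (P 1) (pos u) (pos (n 2)) + cn (P 2) (pos u) (pos (n 1))) = 0 := by
    linear_combination T0 + T1 + T2 + (cw pos (pos y) (W 0) + cw pos (pos y) (W 1) +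
      cw pos (pos y) (W 2) - cw pos (pos u) (R 0) - cw pos (pos u) (R 1) - cw pos (pos u) (R 2)) * h3
  have d01 : (0 : Fin 3) ≠ 1 := by decide
  have d02 : (0 : Fin 3) ≠ 2 := by decide
  have d12 : (1 : Fin 3) ≠ 2 := by decide
  rcases hside 0 with a0 | a0 <;> rcases hside 1 with a1 | a1 <;> rcases hside 2 with a2 | a2
  · rw [hpp 0 1 d01 a0 a1, hpp 0 2 d02 a0 a2, hpp 1 2 d12 a1 a2] at hsum; exact absurd hsum (by decide)
  · rw [hpp 0 1 d01 a0 a1, hpn 0 2 a0 a2, hpn 1 2 a1 a2] at hsum; exact absurd hsum (by decide)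
  · rw [hpn 0 1 a0 a1, hpp 0 2 d02 a0 a2, hnp 1 2 a1 a2] at hsum; exact absurd hsum (by decide)
  · rw [hpn 0 1 a0 a1, hpn 0 2 a0 a2, hnn 1 2 d12 a1 a2] at hsum; exact absurd hsum (by decide)
  · rw [hnp 0 1 a0 a1, hnp 0 2 a0 a2, hpp 1 2 d12 a1 a2] at hsum; exact absurd hsum (by decide)
  · rw [hnp 0 1 a0 a1, hnn 0 2 d02 a0 a2, hpn 1 2 a1 a2] at hsum; exact absurd hsum (by decide)
  · rw [hnn 0 1 d01 a0 a1, hnp 0 2 a0 a2, hnp 1 2 a1 a2] at hsum; exact absurd hsum (by decide)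
  · rw [hnn 0 1 d01 a0 a1, hnn 0 2 d02 a0 a2, hnn 1 2 d12 a1 a2] at hsum; exact absurd hsum (by decide)

/-- The shear `(x, y) ↦ (x + t y, y)`. -/
def shear (t : ℝ) : ℝ × ℝ →ₗ[ℝ] ℝ × ℝ where
  toFun p := (p.1 + t * p.2, p.2)
  map_add' p q := by ext <;> simp; ring
  map_smul' c p := by ext <;> simp; ring

lemma shear_inj (t : ℝ) : Function.Injective (shear t) := by
  intro p q h
  have h1 := congrArg Prod.fst h
  have h2 := congrArg Prod.snd h
  simp only [shear, LinearMap.coe_mk, AddHom.coe_mk] at h1 h2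
  ext
  · rw [h2] at h1; linarith
  · exact h2

lemma shear_segment (t : ℝ) (a b : ℝ × ℝ) :
    segment ℝ (shear t a) (shear t b) = shear t '' segment ℝ a b :=
  (image_segment ℝ (shear t).toAffineMap a b).symm

/-- Shearing a straight-line embedding. -/
def shearEmb {V : Type} {G : SimpleGraph V} (emb : StraightEmbedding G) (t : ℝ) :
    StraightEmbedding G where
  pos := fun v => shear t (emb.pos v)
  inj := (shear_inj t).comp emb.inj
  no_cross := by
    intro a b c d hab hcd hne
    rw [shear_segment, shear_segment, ← Set.image_inter (shear_inj t)]
    rintro _ ⟨x, hx, rfl⟩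
    obtain ⟨z, hz, rfl⟩ := emb.no_cross a b c d hab hcd hne hx
    exact ⟨z, hz, rfl⟩
  vertex_off_edge := by
    intro v a b hab h1 h2
    rw [shear_segment, (shear_inj t).mem_set_image]
    exact emb.vertex_off_edge v a b hab h1 h2

lemma exists_shear {V : Type} [Finite V] {G : SimpleGraph V} (emb : StraightEmbedding G) :
    ∃ t : ℝ, ∀ a b, (shear t (emb.pos a)).1 = (shear t (emb.pos b)).1 → a = b := by
  have hf : (Set.range fun ab : V × V =>
      -((emb.pos ab.1).1 - (emb.pos ab.2).1) / ((emb.pos ab.1).2 - (emb.pos ab.2).2)).Finite :=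
    Set.finite_range _
  obtain ⟨t, ht⟩ := hf.infinite_compl.nonempty
  refine ⟨t, fun a b h => ?_⟩
  simp only [shear, LinearMap.coe_mk, AddHom.coe_mk] at h
  by_cases h2 : (emb.pos a).2 = (emb.pos b).2
  · apply emb.inj
    ext
    · rw [h2] at h; linarith
    · exact h2
  · exfalso
    apply ht
    refine ⟨(a, b), ?_⟩
    have : (emb.pos a).2 - (emb.pos b).2 ≠ 0 := sub_ne_zero.2 h2
    simp only
    rw [div_eq_iff this]
    linarith

theorem theta_false {V : Type} [Finite V] {G : SimpleGraph V} (emb : StraightEmbedding G)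
    (u v y : V) (n : Fin 3 → V)
    (hu : ∀ i, G.Adj u (n i)) (R : ∀ i, G.Walk (n i) v) (hR : ∀ i, u ∉ (R i).support)
    (Q : ∀ i, G.Walk (n i) y)
    (hQ : ∀ i j, i ≠ j → ∀ z ∈ (Q i).support, z ≠ u ∧ z ∉ (R j).support) : False := by
  obtain ⟨t, ht⟩ := exists_shear emb
  exact theta_aux (shearEmb emb t) ht u v y n hu R hR Q hQ

end HalinTW

namespace HalinTW

lemma walk_in_induce {ι : Type} {T : SimpleGraph ι} {S : Set ι} (hS : (T.induce S).Preconnected)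
    {a b : ι} (ha : a ∈ S) (hb : b ∈ S) : ∃ p : T.Walk a b, p.IsPath ∧ ∀ z ∈ p.support, z ∈ S := by
  obtain ⟨p, hp⟩ := hS.exists_isPath ⟨a, ha⟩ ⟨b, hb⟩
  refine ⟨p.map (Embedding.induce (G := T) S).toHom, hp.map (Embedding.induce (G := T) S).injective, ?_⟩
  intro z hz
  obtain ⟨y, -, rfl⟩ := List.mem_map.1 ((Walk.support_map (Embedding.induce (G := T) S).toHom p) ▸ hz)
  exact y.2

lemma path_through {ι : Type} {T : SimpleGraph ι} (hT : T.IsTree) {S : Set ι}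
    (hS : (T.induce S).Preconnected) (r t : ι) (ht : t ∈ S) (hmin : ∀ s ∈ S, T.dist r t ≤ T.dist r s)
    (s : ι) (hs : s ∈ S) : ∃ (p : T.Walk r t) (q : T.Walk t s), (p.append q).IsPath ∧
      (∀ z ∈ q.support, z ∈ S) ∧ (∀ z ∈ p.support, z ≠ t → T.dist r z < T.dist r t) := by
  classical
  obtain ⟨p, hp, hl⟩ := hT.1.exists_path_of_dist r t
  obtain ⟨q, hq, hqS⟩ := walk_in_induce hS ht hs
  have hlt : ∀ z ∈ p.support, z ≠ t → T.dist r z < T.dist r t := by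
    intro z hz hzt
    have h1 := T.dist_le (p.takeUntil z hz)
    have h2 := p.length_takeUntil_lt hz hzt
    omega
  refine ⟨p, q, ?_, hqS, hlt⟩
  rw [Walk.isPath_def, Walk.support_append, List.nodup_append]
  refine ⟨hp.support_nodup, hq.support_nodup.tail, ?_⟩
  rintro a ha b hb rfl
  have haS := hqS a (List.mem_of_mem_tail hb)
  by_cases hat : a = t
  · subst hat
    have := hq.support_nodup
    rw [Walk.support_eq_cons] at this
    exact (List.nodup_cons.1 this).1 hb
  · have h1 := hlt a ha hat
    have h2 := hmin a haS
    omega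

lemma exists_simplicial {V : Type} [Finite V] [Nonempty V] {G : SimpleGraph V} {ι : Type}
    (D : TreeDecomp G ι) : ∃ v t, v ∈ D.bag t ∧ ∀ w, G.Adj v w → w ∈ D.bag t := by
  classical
  obtain ⟨r⟩ := D.isTree.1.nonempty
  have hmin : ∀ v, ∃ t, v ∈ D.bag t ∧ ∀ s, v ∈ D.bag s → D.tree.dist r t ≤ D.tree.dist r s := by
    intro v
    obtain ⟨t, ht, hm⟩ := WellFounded.has_min (measure (fun t => D.tree.dist r t)).wf
      {t | v ∈ D.bag t} (D.mem_bag v)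
    exact ⟨t, ht, fun s hs => not_lt.1 (hm s hs)⟩
  choose t ht hm using hmin
  obtain ⟨v, hv⟩ := Finite.exists_max fun v => D.tree.dist r (t v)
  refine ⟨v, t v, ht v, fun w hw => ?_⟩
  obtain ⟨s, hsv, hsw⟩ := D.edge_bag v w hw
  obtain ⟨p, q, h1, h2, h3⟩ := path_through D.isTree (D.coherence v).preconnected r (t v) (ht v)
    (hm v) s hsv
  obtain ⟨p', q', h1', h2', h3'⟩ := path_through D.isTree (D.coherence w).preconnected r (t w) (ht w)
    (hm w) s hsw
  have heq : p.append q = p'.append q' :=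
    (D.isTree.existsUnique_path r s).unique h1 h1'
  have hmem : t v ∈ (p'.append q').support := by
    rw [← heq, Walk.mem_support_append_iff]; left; simp
  rw [Walk.mem_support_append_iff] at hmem
  rcases hmem with h | h
  · by_cases e : t v = t w
    · rw [e]; exact ht w
    · have := h3' _ h e
      have := hv w
      omega
  · exact h2' _ h

lemma lower_bound {V : Type} [Finite V] [Nonempty V] {G : SimpleGraph V}
    (hdeg : ∀ v, 3 ≤ degB G v) : ¬ TreewidthLE G 2 := by
  rintro ⟨ι, D, hD⟩
  obtain ⟨v, t, hv, hw⟩ := exists_simplicial D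
  have h1 : insert v (G.neighborSet v) ⊆ D.bag t := Set.insert_subset hv hw
  have h2 := Set.ncard_le_ncard h1 (Set.toFinite _)
  rw [Set.ncard_insert_of_notMem (by simp) (Set.toFinite _)] at h2
  have h3 := hdeg v
  have h4 := hD t
  unfold degB at h3
  omega

end HalinTW

namespace HalinTW

lemma reachable_map' {α β : Type} {G : SimpleGraph α} {H : SimpleGraph β} (f : α → β)
    (hf : ∀ a b, G.Adj a b → H.Reachable (f a) (f b)) {a b : α} (h : G.Reachable a b) :
    H.Reachable (f a) (f b) := by
  obtain ⟨p⟩ := h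
  induction p with
  | nil => exact Reachable.refl _
  | cons hab _ ih => exact (hf _ _ hab).trans ih

lemma sum_acyclic {α β : Type} {G : SimpleGraph α} {H : SimpleGraph β} (hG : G.IsAcyclic)
    (hH : H.IsAcyclic) : (G ⊕g H).IsAcyclic := by
  rw [isAcyclic_iff_forall_adj_isBridge] at *
  rintro (a | a) (b | b) hab
  · have h := hG (sum_adj_inl.1 hab)
    rw [isBridge_iff] at h ⊢
    intro hr
    refine h (reachable_map' (Sum.elim id fun _ => a) ?_ hr)
    rintro (x | x) (y | y) hxy
    · apply Adj.reachable
      simpa [deleteEdges_adj] using hxy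
    · simp [deleteEdges_adj] at hxy
    · simp [deleteEdges_adj] at hxy
    · exact Reachable.refl _
  · simp at hab
  · simp at hab
  · have h := hH (sum_adj_inr.1 hab)
    rw [isBridge_iff] at h ⊢
    intro hr
    refine h (reachable_map' (Sum.elim (fun _ => a) id) ?_ hr)
    rintro (x | x) (y | y) hxy
    · exact Reachable.refl _
    · simp [deleteEdges_adj] at hxy
    · simp [deleteEdges_adj] at hxy
    · apply Adj.reachable
      simpa [deleteEdges_adj] using hxy

lemma glue_tree {α β : Type} {G : SimpleGraph α} {H : SimpleGraph β} (hG : G.IsTree)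
    (hH : H.IsTree) (a : α) (b : β) : ((G ⊕g H) ⊔ edge (.inl a) (.inr b)).IsTree :=
  ⟨hG.1.sum_sup_edge hH.1,
    (sum_acyclic hG.2 hH.2).sup_edge_of_not_reachable (not_reachable_sum_inl_inr _ _)⟩

/-- rooted decompositions of a vertex relation, width at most three -/
def RD {V : Type} (H : V → V → Prop) (X B : Set V) : Prop :=
  ∃ (ι : Type) (T : SimpleGraph ι) (r : ι) (bag : ι → Set V), T.IsTree ∧ B ⊆ bag r ∧
    (∀ t, bag t ⊆ X) ∧ (∀ t, (bag t).ncard ≤ 4) ∧ (∀ x ∈ X, ∃ t, x ∈ bag t) ∧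
    (∀ a b, H a b → ∃ t, a ∈ bag t ∧ b ∈ bag t) ∧
    ∀ v, (T.induce {t | v ∈ bag t}).Preconnected

lemma RD.mono {V : Type} {H H' : V → V → Prop} {X B B' : Set V} (h : RD H X B)
    (hH : ∀ a b, H' a b → H a b) (hB : B' ⊆ B) : RD H' X B' := by
  obtain ⟨ι, T, r, bag, h1, h2, h3, h4, h5, h6, h7⟩ := h
  exact ⟨ι, T, r, bag, h1, hB.trans h2, h3, h4, h5, fun a b h => h6 a b (hH a b h), h7⟩

lemma RD.single {V : Type} {B : Set V} (hB : B.ncard ≤ 4) : RD (fun a b => a ∈ B ∧ b ∈ B) B B := by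
  refine ⟨Unit, ⊥, (), fun _ => B, IsTree.of_subsingleton, subset_rfl, fun _ => subset_rfl,
    fun _ => hB, fun x hx => ⟨(), hx⟩, fun a b h => ⟨(), h⟩, fun v => ?_⟩
  intro a b
  rw [Subsingleton.elim a b]

lemma RD.glue {V : Type} {H1 H2 : V → V → Prop} {X1 X2 B1 B2 : Set V} (h : RD H1 X1 B1)
    (h' : RD H2 X2 B2) (hX : ∀ x, x ∈ X1 → x ∈ X2 → x ∈ B1 ∧ x ∈ B2) :
    RD (fun a b => H1 a b ∨ H2 a b) (X1 ∪ X2) B1 := by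
  obtain ⟨ι, T, r, bag, h1, h2, h3, h4, h5, h6, h7⟩ := h
  obtain ⟨ι', T', r', bag', h1', h2', h3', h4', h5', h6', h7'⟩ := h'
  refine ⟨ι ⊕ ι', (T ⊕g T') ⊔ edge (.inl r) (.inr r'), .inl r, Sum.elim bag bag',
    glue_tree h1 h1' r r', h2, ?_, ?_, ?_, ?_, ?_⟩
  · rintro (t | t)
    · exact (h3 t).trans Set.subset_union_left
    · exact (h3' t).trans Set.subset_union_right
  · rintro (t | t)
    · exact h4 t
    · exact h4' t
  · rintro x (hx | hx)
    · obtain ⟨t, ht⟩ := h5 x hx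
      exact ⟨.inl t, ht⟩
    · obtain ⟨t, ht⟩ := h5' x hx
      exact ⟨.inr t, ht⟩
  · rintro a b (hx | hx)
    · obtain ⟨t, ht⟩ := h6 a b hx
      exact ⟨.inl t, ht⟩
    · obtain ⟨t, ht⟩ := h6' a b hx
      exact ⟨.inr t, ht⟩
  · intro v
    have hL : ∀ s t (hs : v ∈ bag s) (ht : v ∈ bag t),
        (((T ⊕g T') ⊔ edge (.inl r) (.inr r')).induce {t | v ∈ Sum.elim bag bag' t}).Reachable
          ⟨.inl s, hs⟩ ⟨.inl t, ht⟩ := by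
      intro s t hs ht
      refine reachable_map' (G := T.induce {t | v ∈ bag t}) (β := {t | v ∈ Sum.elim bag bag' t})
        (fun x => ⟨.inl x.1, x.2⟩) ?_
        (h7 v ⟨s, hs⟩ ⟨t, ht⟩)
      intro x y hxy
      apply Adj.reachable
      simpa using Or.inl hxy
    have hR : ∀ s t (hs : v ∈ bag' s) (ht : v ∈ bag' t),
        (((T ⊕g T') ⊔ edge (.inl r) (.inr r')).induce {t | v ∈ Sum.elim bag bag' t}).Reachable
          ⟨.inr s, hs⟩ ⟨.inr t, ht⟩ := by
      intro s t hs ht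
      refine reachable_map' (G := T'.induce {t | v ∈ bag' t}) (β := {t | v ∈ Sum.elim bag bag' t})
        (fun x => ⟨.inr x.1, x.2⟩) ?_
        (h7' v ⟨s, hs⟩ ⟨t, ht⟩)
      intro x y hxy
      apply Adj.reachable
      simpa using Or.inl hxy
    have hLR : ∀ s t (hs : v ∈ bag s) (ht : v ∈ bag' t),
        (((T ⊕g T') ⊔ edge (.inl r) (.inr r')).induce {t | v ∈ Sum.elim bag bag' t}).Reachable
          ⟨.inl s, hs⟩ ⟨.inr t, ht⟩ := by
      intro s t hs ht
      obtain ⟨a, b⟩ := hX v (h3 _ hs) (h3' _ ht)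
      refine (hL s r hs (h2 a)).trans (Reachable.trans ?_ (hR r' t (h2' b) ht))
      apply Adj.reachable
      simp [edge_adj]
    rintro ⟨(s | s), hs⟩ ⟨(t | t), ht⟩
    · exact hL s t hs ht
    · exact hLR s t hs ht
    · exact (hLR t s ht hs).symm
    · exact hR s t hs ht

lemma RD.treewidth {V : Type} {G : SimpleGraph V} {B : Set V} (h : RD G.Adj Set.univ B) :
    TreewidthLE G 3 := by
  obtain ⟨ι, T, r, bag, h1, h2, h3, h4, h5, h6, h7⟩ := h
  refine ⟨ι, ⟨T, h1, bag, fun v => h5 v trivial, h6, fun v => ?_⟩, h4⟩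
  obtain ⟨t, ht⟩ := h5 v trivial
  have : Nonempty {t | v ∈ bag t} := ⟨⟨t, ht⟩⟩
  exact ⟨h7 v⟩

end HalinTW

namespace HalinTW

variable {V : Type} {T : SimpleGraph V}

/-- the component of `c` after deleting the edge `vc` -/
def side (T : SimpleGraph V) (v c : V) : Set V := {w | (T.deleteEdges {s(v, c)}).Reachable c w}

lemma side_self (v c : V) : c ∈ side T v c := Reachable.refl _

lemma notMem_side (hT : T.IsTree) {v c : V} (h : T.Adj v c) : v ∉ side T v c := by
  have := (isAcyclic_iff_forall_adj_isBridge.1 hT.2) h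
  rw [isBridge_iff] at this
  exact fun h => this (Reachable.symm h)

lemma side_step (hT : T.IsTree) {v c a b : V} (h : T.Adj v c) (ha : a ∈ side T v c)
    (hab : T.Adj a b) : b ∈ side T v c ∨ (a = c ∧ b = v) := by
  by_cases e : s(a, b) = s(v, c)
  · rw [Sym2.eq_iff] at e
    rcases e with ⟨rfl, rfl⟩ | ⟨rfl, rfl⟩
    · exact absurd ha (notMem_side hT h)
    · right; exact ⟨rfl, rfl⟩
  · left
    refine Reachable.trans ha (Adj.reachable ?_)
    rw [deleteEdges_adj]
    exact ⟨hab, e⟩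

lemma exists_side (hT : T.IsTree) {v w : V} (h : w ≠ v) : ∃ c, T.Adj v c ∧ w ∈ side T v c := by
  obtain ⟨p, hp⟩ := hT.1.preconnected.exists_isPath v w
  cases p with
  | nil => exact absurd rfl h
  | cons hc q =>
    rename_i c
    refine ⟨c, hc, ?_⟩
    rw [Walk.cons_isPath_iff] at hp
    refine ⟨q.toDeleteEdges _ ?_⟩
    rintro e he rfl
    exact hp.2 (Walk.fst_mem_support_of_mem_edges _ he)

lemma walk_side {v c w : V} (h : w ∈ side T v c) :
    ∃ p : T.Walk c w, ∀ z ∈ p.support, z ∈ side T v c := by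
  classical
  obtain ⟨p⟩ := h
  refine ⟨p.mapLe (deleteEdges_le _), fun z hz => ?_⟩
  rw [Walk.support_mapLe_eq_support] at hz
  exact ⟨p.takeUntil z hz⟩

lemma path_side {v c a b : V} (ha : a ∈ side T v c) (hb : b ∈ side T v c) :
    ∃ p : T.Walk a b, p.IsPath ∧ ∀ z ∈ p.support, z ∈ side T v c := by
  classical
  obtain ⟨p, hp⟩ := walk_side ha
  obtain ⟨q, hq⟩ := walk_side hb
  refine ⟨(p.reverse.append q).bypass, Walk.bypass_isPath _, fun z hz => ?_⟩
  have := Walk.support_bypass_subset _ hz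
  rw [Walk.mem_support_append_iff] at this
  rcases this with h | h
  · exact hp z (by simpa using h)
  · exact hq z h

lemma conn_ind (hT : T.Connected) {P : V → Prop} {c : V} (hc : P c)
    (hP : ∀ a b, P a → T.Adj a b → P b) (w : V) : P w := by
  obtain ⟨p⟩ := hT.preconnected c w
  induction p with
  | nil => exact hc
  | cons h _ ih => exact ih (hP _ _ hc h)

lemma mem_side_swap (hT : T.IsTree) {v c w : V} (h : T.Adj v c) (hw : w ∉ side T v c) :
    w ∈ side T c v := by
  have := conn_ind hT.1 (P := fun w => w ∈ side T v c ∨ w ∈ side T c v) (c := c)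
    (Or.inl (side_self _ _)) ?_ w
  · exact this.resolve_left hw
  · rintro a b (ha | ha) hab
    · rcases side_step hT h ha hab with h | ⟨rfl, rfl⟩
      · exact Or.inl h
      · exact Or.inr (side_self _ _)
    · rcases side_step hT h.symm ha hab with h | ⟨rfl, rfl⟩
      · exact Or.inr h
      · exact Or.inl (side_self _ _)

lemma notMem_side_swap (hT : T.IsTree) {v c w : V} (h : T.Adj v c) (hw : w ∈ side T c v) :
    w ∉ side T v c := by
  intro hw'
  apply notMem_side hT h
  refine Reachable.trans hw' ?_
  have := Reachable.symm hw
  rwa [Sym2.eq_swap] at this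

lemma leaf_unique {c a b : V} (hc : degB T c = 1) (ha : T.Adj c a) (hb : T.Adj c b) : a = b := by
  obtain ⟨x, hx⟩ := Set.ncard_eq_one.1 hc
  have h1 : a ∈ T.neighborSet c := ha
  have h2 : b ∈ T.neighborSet c := hb
  rw [hx] at h1 h2
  rw [h1, h2]

lemma nonleaf_other {c v : V} (hc : degB T c ≠ 1) (hv : T.Adj c v) : ∃ d, d ≠ v ∧ T.Adj c d := by
  by_contra! hcon
  apply hc
  refine Set.ncard_eq_one.2 ⟨v, ?_⟩
  ext x
  constructor
  · intro hx
    by_contra hne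
    exact hcon x hne hx
  · rintro rfl
    exact hv

lemma side_leaf (hT : T.IsTree) {v c w : V} (h : T.Adj v c) (hc : degB T c = 1)
    (hw : w ∈ side T v c) : w = c := by
  obtain ⟨p, hp⟩ := walk_side hw
  cases p with
  | nil => rfl
  | cons hd q =>
    exfalso
    have := leaf_unique hc h.symm hd
    subst this
    exact notMem_side hT h (hp _ (by simp))

lemma path_leaf [Finite V] {a b z : V} {p : T.Walk a b} (hp : p.IsPath) (hz : z ∈ p.support)
    (hl : degB T z = 1) : z = a ∨ z = b := by
  obtain ⟨k, rfl, hk⟩ := Walk.mem_support_iff_exists_getVert.1 hz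
  by_cases h0 : k = 0
  · left; subst h0; simp
  by_cases h1 : k = p.length
  · right; subst h1; simp
  exfalso
  have h2 := hp.ncard_neighborSet_toSubgraph_internal_eq_two h0 (by omega)
  have h3 : p.toSubgraph.neighborSet (p.getVert k) ⊆ T.neighborSet (p.getVert k) :=
    Subgraph.neighborSet_subset _ _
  have h4 := Set.ncard_le_ncard h3 (Set.toFinite _)
  unfold degB at hl
  omega

/-- a piece closed under tree adjacency except at `v` -/
def Closed (T : SimpleGraph V) (X : Set V) (v : V) : Prop :=
  v ∈ X ∧ ∀ a ∈ X, a ≠ v → ∀ b, T.Adj a b → b ∈ X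

lemma Closed.walk {X : Set V} {v : V} (hX : Closed T X v) {a b : V} (p : T.Walk a b)
    (hp : ∀ z ∈ p.support, z ≠ v) (ha : a ∈ X) : b ∈ X := by
  induction p with
  | nil => exact ha
  | cons h q ih =>
    refine ih (fun z hz => hp z (by simp [hz])) ?_
    exact hX.2 _ ha (hp _ (by simp)) _ h

lemma Closed.side_subset (hT : T.IsTree) {X : Set V} {v c : V} (hX : Closed T X v)
    (h : T.Adj v c) (hc : c ∈ X) : side T v c ⊆ X := by
  intro w hw
  obtain ⟨p, hp⟩ := walk_side hw
  exact hX.walk p (fun z hz e => notMem_side hT h (e ▸ hp z hz)) hc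

lemma Closed.mem_of_side (hT : T.IsTree) {X : Set V} {v c w : V} (hX : Closed T X v)
    (h : T.Adj v c) (hw : w ∈ X) (hws : w ∈ side T v c) : c ∈ X := by
  obtain ⟨p, hp⟩ := walk_side hws
  exact hX.walk p.reverse (fun z hz e => notMem_side hT h (e ▸ hp z (by simpa using hz))) hw

lemma closed_side (hT : T.IsTree) {v c : V} (h : T.Adj v c) : Closed T (side T v c) c :=
  ⟨side_self _ _, fun _ ha hne _ hab => (side_step hT h ha hab).resolve_right fun e => hne e.1⟩

lemma closed_insert (hT : T.IsTree) {v c : V} (h : T.Adj v c) :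
    Closed T (insert v (side T v c)) v := by
  refine ⟨Set.mem_insert _ _, ?_⟩
  rintro a (rfl | ha) hne b hab
  · exact absurd rfl hne
  · rcases side_step hT h ha hab with h | h
    · exact Or.inr h
    · exact Or.inl h.2

lemma Closed.diff (hT : T.IsTree) {X : Set V} {v c : V} (hX : Closed T X v) (h : T.Adj v c) :
    Closed T (X \ side T v c) v := by
  refine ⟨⟨hX.1, notMem_side hT h⟩, ?_⟩
  rintro a ⟨ha, has⟩ hne b hab
  refine ⟨hX.2 a ha hne b hab, fun hb => ?_⟩
  rcases side_step hT h hb hab.symm with h | h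
  · exact has h
  · exact hne h.2

lemma Closed.exists_leaf [Finite V] (hT : T.IsTree) {X : Set V} {v w : V} (hX : Closed T X v)
    (hw : w ∈ X) (hne : w ≠ v) : ∃ l ∈ X, l ≠ v ∧ degB T l = 1 := by
  induction hN : X.ncard using Nat.strong_induction_on generalizing X v w with
  | _ N ih =>
    obtain ⟨c, hc, hwc⟩ := exists_side hT hne
    have hcX := hX.mem_of_side hT hc hw hwc
    have hsub := hX.side_subset hT hc hcX
    by_cases hl : degB T c = 1
    · exact ⟨c, hcX, hc.ne', hl⟩
    obtain ⟨d, hd, hcd⟩ := nonleaf_other hl hc.symm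
    have hds : d ∈ side T v c :=
      (side_step hT hc (side_self _ _) hcd).resolve_right fun e => hd e.2
    have hlt : (side T v c).ncard < N := by
      rw [← hN]
      refine Set.ncard_lt_ncard ⟨hsub, fun h => ?_⟩ (Set.toFinite _)
      exact notMem_side hT hc (h hX.1)
    obtain ⟨l, h1, h2, h3⟩ := ih _ hlt (closed_side hT hc) hds hcd.ne' rfl
    exact ⟨l, hsub h1, fun e => notMem_side hT hc (e ▸ h1), h3⟩

end HalinTW

namespace HalinTW

/-- an enumeration of the leaf cycle -/
structure CycEnum {V : Type} (T C : SimpleGraph V) (l : ℕ → V) (n : ℕ) : Prop where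
  three : 3 ≤ n
  closing : l n = l 0
  inj : ∀ i j, i < n → j < n → l i = l j → i = j
  leaf : ∀ i, degB T (l i) = 1
  surj : ∀ x, degB T x = 1 → ∃ k, k < n ∧ l k = x
  adj : ∀ k, k < n → C.Adj (l k) (l (k + 1))
  cadj : ∀ a b, C.Adj a b → ∃ k, k < n ∧ ((a = l k ∧ b = l (k + 1)) ∨ (b = l k ∧ a = l (k + 1)))

lemma arc {V : Type} {G : SimpleGraph V} {l : ℕ → V} {n : ℕ} (h : ∀ k, k < n → G.Adj (l k) (l (k + 1)))
    (s t : ℕ) (hst : s ≤ t) (ht : t ≤ n) :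
    ∃ p : G.Walk (l s) (l t), ∀ z ∈ p.support, ∃ k, s ≤ k ∧ k ≤ t ∧ z = l k := by
  induction t, hst using Nat.le_induction with
  | base => exact ⟨Walk.nil, fun z hz => ⟨s, le_rfl, le_rfl, by simpa using hz⟩⟩
  | succ t hst ih =>
    obtain ⟨p, hp⟩ := ih (by omega)
    refine ⟨p.concat (h t (by omega)), fun z hz => ?_⟩
    rw [Walk.support_concat, List.mem_append] at hz
    rcases hz with hz | hz
    · obtain ⟨k, h1, h2, h3⟩ := hp z hz
      exact ⟨k, h1, by omega, h3⟩
    · exact ⟨t + 1, by omega, le_rfl, by simpa using hz⟩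

lemma arc_rev {V : Type} {G : SimpleGraph V} {l : ℕ → V} {n : ℕ} (h : ∀ k, k < n → G.Adj (l k) (l (k + 1)))
    (s t : ℕ) (hst : s ≤ t) (ht : t ≤ n) :
    ∃ p : G.Walk (l t) (l s), ∀ z ∈ p.support, ∃ k, s ≤ k ∧ k ≤ t ∧ z = l k := by
  obtain ⟨p, hp⟩ := arc h s t hst ht
  exact ⟨p.reverse, fun z hz => hp z (by simpa using hz)⟩

lemma theta_pred {V : Type} [Finite V] {G : SimpleGraph V} (emb : StraightEmbedding G) (u v y : V)
    (PR PQ : Fin 3 → V → Prop)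
    (hex : ∀ i, ∃ (x : V) (_ : G.Adj u x) (R : G.Walk x v) (Q : G.Walk x y), u ∉ R.support ∧
      (∀ z ∈ R.support, PR i z) ∧ ∀ z ∈ Q.support, PQ i z)
    (hPQ : ∀ i j, i ≠ j → ∀ z, PQ i z → z ≠ u ∧ ¬ PR j z) : False := by
  choose n hu R Q h1 h2 h3 using hex
  exact theta_false emb u v y n hu R h1 Q fun i j hij z hz =>
    ⟨(hPQ i j hij z (h3 i z hz)).1, fun hz' => (hPQ i j hij z (h3 i z hz)).2 (h2 j z hz')⟩

lemma first_step {V : Type} {T : SimpleGraph V} {a b : V} {p : T.Walk a b} (hp : p.IsPath)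
    (hab : a ≠ b) : ∃ (x : V) (_ : T.Adj a x) (q : T.Walk x b), q.IsPath ∧ a ∉ q.support ∧
      ∀ z ∈ q.support, z ∈ p.support := by
  cases p with
  | nil => exact absurd rfl hab
  | cons h q =>
    rw [Walk.cons_isPath_iff] at hp
    exact ⟨_, h, q, hp.1, hp.2, fun z hz => by simp [hz]⟩

lemma noncross {V : Type} [Finite V] {G T C : SimpleGraph V} (hG : G = T ⊔ C)
    (emb : StraightEmbedding G) (hT : T.IsTree) {l : ℕ → V} {n : ℕ} (hl : CycEnum T C l n)
    {t : V} (hρt : T.Adj (l 0) t) (ht : degB T t ≠ 1) {v c : V} (hvc : T.Adj v c)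
    (h0 : l 0 ∉ side T v c) {i m m' : ℕ} (hi : 1 ≤ i) (him : i < m) (hmm : m < m') (hm' : m' < n)
    (hiK : l i ∈ side T v c) (hmK : l m ∉ side T v c) (hmK' : l m' ∈ side T v c) : False := by
  have hTG : T ≤ G := hG ▸ le_sup_left
  have hCG : C ≤ G := hG ▸ le_sup_right
  have hadj : ∀ k, k < n → G.Adj (l k) (l (k + 1)) := fun k hk => hCG (hl.adj k hk)
  have hc : degB T c ≠ 1 := by
    intro hc
    have h1 := side_leaf hT hvc hc hiK
    have h2 := side_leaf hT hvc hc hmK'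
    have := hl.inj i m' (by omega) hm' (h1.trans h2.symm)
    omega
  have hne : ∀ a b, a < n → b < n → a ≠ b → l a ≠ l b := fun a b ha hb hab e =>
    hab (hl.inj a b ha hb e)
  refine theta_pred emb (l 0) (l m) c
    ![fun z => ∃ k, 1 ≤ k ∧ k ≤ m ∧ z = l k, fun z => ∃ k, m ≤ k ∧ k ≤ n - 1 ∧ z = l k,
      fun z => z ∉ side T v c ∧ (degB T z = 1 → z = l m)]
    ![fun z => (∃ k, 1 ≤ k ∧ k ≤ i ∧ z = l k) ∨ (z ∈ side T v c ∧ (degB T z = 1 → z = l i)),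
      fun z => (∃ k, m' ≤ k ∧ k ≤ n - 1 ∧ z = l k) ∨ (z ∈ side T v c ∧ (degB T z = 1 → z = l m')),
      fun z => degB T z ≠ 1] ?_ ?_
  · have hTail : ∀ q, q < n → l q ∈ side T v c → ∃ p : G.Walk (l q) c,
        ∀ z ∈ p.support, z ∈ side T v c ∧ (degB T z = 1 → z = l q) := by
      intro q hq hqK
      obtain ⟨p, hp, hps⟩ := path_side hqK (side_self v c)
      refine ⟨p.mapLe hTG, fun z hz => ?_⟩
      rw [Walk.support_mapLe_eq_support] at hz
      refine ⟨hps z hz, fun hzl => (path_leaf hp hz hzl).resolve_right ?_⟩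
      rintro rfl
      exact hc hzl
    intro a
    fin_cases a
    · obtain ⟨R, hR⟩ := arc hadj 1 m (by omega) (by omega)
      obtain ⟨Q, hQ⟩ := arc hadj 1 i (by omega) (by omega)
      obtain ⟨Q', hQ'⟩ := hTail i (by omega) hiK
      refine ⟨l 1, hadj 0 (by omega), R, Q.append Q', ?_, hR, ?_⟩
      · intro hz
        obtain ⟨k, h1, h2, h3⟩ := hR _ hz
        exact hne 0 k (by omega) (by omega) (by omega) h3
      · intro z hz
        rw [Walk.mem_support_append_iff] at hz
        exact hz.imp (hQ z) (hQ' z)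
    · obtain ⟨R, hR⟩ := arc_rev hadj m (n - 1) (by omega) (by omega)
      obtain ⟨Q, hQ⟩ := arc_rev hadj m' (n - 1) (by omega) (by omega)
      obtain ⟨Q', hQ'⟩ := hTail m' (by omega) hmK'
      have h3 := hl.three
      refine ⟨l (n - 1), ?_, R, Q.append Q', ?_, hR, ?_⟩
      · have := hadj (n - 1) (by omega)
        rw [show n - 1 + 1 = n by omega, hl.closing] at this
        exact this.symm
      · intro hz
        obtain ⟨k, h1, h2, h3⟩ := hR _ hz
        exact hne 0 k (by omega) (by omega) (by omega) h3
      · intro z hz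
        rw [Walk.mem_support_append_iff] at hz
        exact hz.imp (hQ z) (hQ' z)
    · obtain ⟨p, hp, hps⟩ := path_side (mem_side_swap hT hvc h0) (mem_side_swap hT hvc hmK)
      obtain ⟨x, h, q, hp1, hp2, hp3⟩ :=
        first_step hp (hne 0 m (by omega) (by omega) (by omega))
      · have := leaf_unique (hl.leaf 0) hρt h
        subst this
        obtain ⟨Q, hQ⟩ := hT.1.preconnected.exists_isPath t c
        refine ⟨t, hTG hρt, q.mapLe hTG, Q.mapLe hTG, ?_, ?_, ?_⟩
        · rw [Walk.support_mapLe_eq_support]; exact hp2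
        · intro z hz
          rw [Walk.support_mapLe_eq_support] at hz
          refine ⟨notMem_side_swap hT hvc (hps z (hp3 z hz)), fun hzl => ?_⟩
          refine (path_leaf hp1 hz hzl).resolve_left ?_
          rintro rfl
          exact ht hzl
        · intro z hz hzl
          rw [Walk.support_mapLe_eq_support] at hz
          rcases path_leaf hQ hz hzl with rfl | rfl
          · exact ht hzl
          · exact hc hzl
  · have hside : ∀ z, z ∈ side T v c → z ≠ l 0 := fun z hz e => h0 (e ▸ hz)
    intro a b hab z hz
    fin_cases a <;> fin_cases b
    · exact absurd rfl hab
    · rcases hz with ⟨k, h1, h2, rfl⟩ | ⟨h1, h2⟩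
      · refine ⟨hne k 0 (by omega) (by omega) (by omega), ?_⟩
        rintro ⟨k', h1', h2', h3'⟩
        exact hne k k' (by omega) (by omega) (by omega) h3'
      · refine ⟨hside z h1, ?_⟩
        rintro ⟨k', h1', h2', rfl⟩
        exact hne i k' (by omega) (by omega) (by omega) (h2 (hl.leaf k')).symm
    · rcases hz with ⟨k, h1, h2, rfl⟩ | ⟨h1, h2⟩
      · refine ⟨hne k 0 (by omega) (by omega) (by omega), ?_⟩
        rintro ⟨h1', h2'⟩
        exact hne k m (by omega) (by omega) (by omega) (h2' (hl.leaf k))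
      · exact ⟨hside z h1, fun h => h.1 h1⟩
    · rcases hz with ⟨k, h1, h2, rfl⟩ | ⟨h1, h2⟩
      · refine ⟨hne k 0 (by omega) (by omega) (by omega), ?_⟩
        rintro ⟨k', h1', h2', h3'⟩
        exact hne k k' (by omega) (by omega) (by omega) h3'
      · refine ⟨hside z h1, ?_⟩
        rintro ⟨k', h1', h2', rfl⟩
        exact hne m' k' (by omega) (by omega) (by omega) (h2 (hl.leaf k')).symm
    · exact absurd rfl hab
    · rcases hz with ⟨k, h1, h2, rfl⟩ | ⟨h1, h2⟩
      · refine ⟨hne k 0 (by omega) (by omega) (by omega), ?_⟩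
        rintro ⟨h1', h2'⟩
        exact hne k m (by omega) (by omega) (by omega) (h2' (hl.leaf k))
      · exact ⟨hside z h1, fun h => h.1 h1⟩
    · refine ⟨fun e => hz (e ▸ hl.leaf 0), ?_⟩
      rintro ⟨k', h1', h2', rfl⟩
      exact hz (hl.leaf k')
    · refine ⟨fun e => hz (e ▸ hl.leaf 0), ?_⟩
      rintro ⟨k', h1', h2', rfl⟩
      exact hz (hl.leaf k')
    · exact absurd rfl hab

lemma exists_enum {V : Type} [Finite V] {T C : SimpleGraph V}
    (h1 : ∀ v, degB T v = 1 → degB C v = 2) (h2 : ∀ v, degB T v ≠ 1 → degB C v = 0)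
    (hc : (C.induce {v | degB T v = 1}).Connected) : ∃ l n, CycEnum T C l n := by
  obtain ⟨⟨ρ, hρ⟩⟩ := hc.nonempty
  have hcyc : C.IsCycles := by
    intro v hv
    by_cases h : degB T v = 1
    · exact h1 v h
    · have h0 := h2 v h
      unfold degB at h0
      rw [Set.ncard_eq_zero (Set.toFinite _)] at h0
      rw [h0] at hv
      exact absurd hv Set.not_nonempty_empty
  have hCl : ∀ a b, C.Adj a b → degB T a = 1 := by
    intro a b hab
    by_contra h
    have h0 := h2 a h
    unfold degB at h0
    rw [Set.ncard_eq_zero (Set.toFinite _)] at h0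
    have : b ∈ C.neighborSet a := hab
    rw [h0] at this
    exact this
  have hne : (C.neighborSet ρ).Nonempty := by
    rw [← Set.ncard_pos (Set.toFinite _)]
    have := h1 ρ hρ
    unfold degB at this
    omega
  obtain ⟨p, hp, hps⟩ := hcyc.exists_cycle_toSubgraph_verts_eq_connectedComponentSupp
    (c := C.connectedComponentMk ρ) (v := ρ) rfl hne
  have hsurj : ∀ x, degB T x = 1 → ∃ k, k < p.length ∧ p.getVert k = x := by
    intro x hx
    have h : x ∈ p.toSubgraph.verts := by
      rw [hps]
      have := (hc.preconnected ⟨x, hx⟩ ⟨ρ, hρ⟩).map (Embedding.induce (G := C) _).toHom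
      exact ConnectedComponent.sound this
    rw [Walk.mem_verts_toSubgraph, Walk.mem_support_iff_exists_getVert] at h
    obtain ⟨k, hk, hkl⟩ := h
    by_cases e : k = p.length
    · subst e
      refine ⟨0, by have := hp.three_le_length; omega, ?_⟩
      simpa using hk
    · exact ⟨k, by omega, hk⟩
  refine ⟨p.getVert, p.length, hp.three_le_length, by simp, ?_, ?_, hsurj, ?_, ?_⟩
  · intro i j hi hj h
    have h3 := hp.three_le_length
    exact hp.getVert_injOn' (by simp; omega) (by simp; omega) h
  · intro i
    by_cases hi : i < p.length
    · exact hCl _ _ (p.adj_getVert_succ hi)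
    · rw [Walk.getVert_of_length_le _ (by omega)]
      exact hρ
  · intro k hk
    exact p.adj_getVert_succ hk
  · intro a b hab
    obtain ⟨k, hk, rfl⟩ := hsurj a (hCl a b hab)
    have e1 := hp.ncard_neighborSet_toSubgraph_eq_two (Walk.getVert_mem_support p k)
    have e2 := h1 _ (hCl _ _ hab)
    have e3 : p.toSubgraph.neighborSet (p.getVert k) = C.neighborSet (p.getVert k) :=
      Set.eq_of_subset_of_ncard_le (Subgraph.neighborSet_subset _ _)
        (by unfold degB at e2; omega) (Set.toFinite _)
    have e4 : b ∈ p.toSubgraph.neighborSet (p.getVert k) := by rw [e3]; exact hab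
    obtain ⟨q, hq, hql⟩ := (Walk.toSubgraph_adj_iff _).1 e4
    refine ⟨q, hql, ?_⟩
    rw [Sym2.eq_iff] at hq
    rcases hq with ⟨x, y⟩ | ⟨x, y⟩
    · exact Or.inl ⟨x.symm, y.symm⟩
    · exact Or.inr ⟨x.symm, y.symm⟩

end HalinTW

namespace HalinTW

lemma ncard_four {V : Type} (a b c d : V) : ({a, b, c, d} : Set V).ncard ≤ 4 := by
  classical
  have : ({a, b, c, d} : Set V) = (({a, b, c, d} : Finset V) : Set V) := by simp
  rw [this, Set.ncard_coe_finset]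
  exact Finset.card_le_four

lemma piece {V : Type} [Finite V] {G T C : SimpleGraph V} (hG : G = T ⊔ C)
    (emb : StraightEmbedding G) (hT : T.IsTree) {l : ℕ → V} {n : ℕ} (hl : CycEnum T C l n)
    {t : V} (hρt : T.Adj (l 0) t) (ht : degB T t ≠ 1) (N : ℕ) :
    ∀ (X : Set V) (v : V) (i j : ℕ), X.ncard = N → degB T v ≠ 1 → Closed T X v → l 0 ∉ X →
      1 ≤ i → i ≤ j → j < n → (∀ k, 1 ≤ k → k < n → (l k ∈ X ↔ i ≤ k ∧ k ≤ j)) →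
      RD (fun a b => a ∈ X ∧ b ∈ X ∧ G.Adj a b) X {v, l i, l j} := by
  have hCl : ∀ a b, C.Adj a b → degB T a = 1 ∧ degB T b = 1 := by
    intro a b hab
    obtain ⟨k, hk, ⟨rfl, rfl⟩ | ⟨rfl, rfl⟩⟩ := hl.cadj a b hab <;> exact ⟨hl.leaf _, hl.leaf _⟩
  induction N using Nat.strong_induction_on with
  | _ N ih =>
  intro X v i j hN hv hX hρ hi hij hj hlX
  have hlv : ∀ k, l k ≠ v := fun k e => hv (e ▸ hl.leaf k)
  obtain ⟨c, hc, hic⟩ := exists_side hT (hlv i)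
  have hiX : l i ∈ X := (hlX i hi (by omega)).2 ⟨le_rfl, hij⟩
  have hjX : l j ∈ X := (hlX j (by omega) hj).2 ⟨hij, le_rfl⟩
  have hcX := hX.mem_of_side hT hc hiX hic
  have hsub := hX.side_subset hT hc hcX
  have hvK := notMem_side hT hc
  by_cases hcase : ∀ x ∈ X, x ∉ side T v c → x = v
  · have hXK : ∀ x ∈ X, x = v ∨ x ∈ side T v c := by
      intro x hx
      by_cases h : x ∈ side T v c
      · exact Or.inr h
      · exact Or.inl (hcase x hx h)
    have hjK : l j ∈ side T v c := (hXK _ hjX).resolve_left (hlv j)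
    by_cases hcl : degB T c = 1
    · have e1 := side_leaf hT hc hcl hic
      have e2 := side_leaf hT hc hcl hjK
      have hXe : X = {v, c, c, c} := by
        ext x
        constructor
        · intro hx
          rcases hXK x hx with h | h
          · simp [h]
          · simp [side_leaf hT hc hcl h]
        · intro hx
          have : x = v ∨ x = c := by simpa using hx
          rcases this with rfl | rfl
          · exact hX.1
          · exact hcX
      have := RD.single (ncard_four v c c c)
      rw [← hXe] at this
      refine this.mono (fun a b h => ⟨h.1, h.2.1⟩) ?_
      rw [e1, e2, hXe]
      intro x hx
      simpa using hx
    · have hlt : (side T v c).ncard < N := by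
        rw [← hN]
        exact Set.ncard_lt_ncard ⟨hsub, fun h => hvK (h hX.1)⟩ (Set.toFinite _)
      have hrec := ih _ hlt (side T v c) c i j rfl hcl (closed_side hT hc) (fun h => hρ (hsub h))
        hi hij hj (fun k hk hk' => ⟨fun h => (hlX k hk hk').1 (hsub h), fun h =>
          (hXK _ ((hlX k hk hk').2 h)).resolve_left (hlv k)⟩)
      have hgl := (RD.single (ncard_four v c (l i) (l j))).glue hrec (by
        rintro x hx hxK
        refine ⟨hx, ?_⟩
        rcases hx with rfl | hx
        · exact absurd hxK hvK
        · exact hx)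
      have hXe : ({v, c, l i, l j} : Set V) ∪ side T v c = X := by
        ext x
        constructor
        · rintro ((rfl | rfl | rfl | rfl) | hx)
          · exact hX.1
          · exact hcX
          · exact hiX
          · exact hjX
          · exact hsub hx
        · intro hx
          rcases hXK x hx with rfl | h
          · left; simp
          · exact Or.inr h
      rw [hXe] at hgl
      have hvadj : ∀ b, b ∈ side T v c → G.Adj v b → b = c := by
        intro b hb hvb
        rw [hG, sup_adj] at hvb
        rcases hvb with h | h
        · rcases side_step hT hc hb h.symm with h | h
          · exact absurd h hvK
          · exact h.1
        · exact absurd (hCl _ _ h).1 hv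
      refine hgl.mono ?_ ?_
      · rintro a b ⟨ha, hb, hab⟩
        rcases hXK a ha with rfl | ha <;> rcases hXK b hb with rfl | hb
        · exact absurd rfl hab.ne
        · left; rw [hvadj b hb hab]; simp
        · left; rw [hvadj a ha hab.symm]; simp
        · exact Or.inr ⟨ha, hb, hab⟩
      · rintro x (rfl | rfl | rfl) <;> simp
  · push Not at hcase
    obtain ⟨w, hwX, hwK, hwv⟩ := hcase
    have hcl2 := hX.diff hT hc
    obtain ⟨y, hy, hyv, hyl⟩ := hcl2.exists_leaf hT ⟨hwX, hwK⟩ hwv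
    obtain ⟨q, hq, rfl⟩ := hl.surj y hyl
    have hq1 : 1 ≤ q := by
      by_contra h
      have : q = 0 := by omega
      subst this
      exact hρ hy.1
    have hqij := (hlX q hq1 hq).1 hy.1
    have h0K : l 0 ∉ side T v c := fun h => hρ (hsub h)
    -- last index in the side
    obtain ⟨k, hik, hkj, hkK, hkmax⟩ : ∃ k, i ≤ k ∧ k ≤ j ∧ l k ∈ side T v c ∧
        ∀ k', k < k' → k' ≤ j → l k' ∉ side T v c := by
      classical
      refine ⟨Nat.findGreatest (fun k => l k ∈ side T v c) j, Nat.le_findGreatest hij hic,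
        Nat.findGreatest_le _, Nat.findGreatest_spec (P := fun k => l k ∈ side T v c) hij hic, ?_⟩
      intro k' h1 h2
      exact Nat.findGreatest_is_greatest h1 h2
    have hmid : ∀ m, i ≤ m → m ≤ k → l m ∈ side T v c := by
      intro m h1 h2
      by_contra hm
      have n1 : m ≠ i := by rintro rfl; exact hm hic
      have n2 : m ≠ k := by rintro rfl; exact hm hkK
      exact noncross hG emb hT hl hρt ht hc h0K hi (by omega : i < m) (by omega : m < k) (by omega)
        hic hm hkK
    have hkq : k < q := by
      by_contra h
      exact hy.2 (hmid q hqij.1 (by omega))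
    have hKiff : ∀ m, 1 ≤ m → m < n → (l m ∈ side T v c ↔ i ≤ m ∧ m ≤ k) := by
      intro m h1 h2
      constructor
      · intro h
        have h3 := (hlX m h1 h2).1 (hsub h)
        refine ⟨h3.1, ?_⟩
        by_contra h4
        exact hkmax m (by omega) h3.2 h
      · rintro ⟨h3, h4⟩
        exact hmid m h3 h4
    have hlt1 : (insert v (side T v c)).ncard < N := by
      rw [← hN]
      refine Set.ncard_lt_ncard ⟨Set.insert_subset hX.1 hsub, fun h => ?_⟩ (Set.toFinite _)
      exact (h hwX).elim hwv hwK
    have hlt2 : (X \ side T v c).ncard < N := by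
      rw [← hN]
      refine Set.ncard_lt_ncard ⟨Set.diff_subset, fun h => ?_⟩ (Set.toFinite _)
      exact (h hiX).2 hic
    have r1 := ih _ hlt1 (insert v (side T v c)) v i k rfl hv (closed_insert hT hc)
      (by rintro (h | h); exacts [hlv 0 h, h0K h]) hi hik (by omega) (by
        intro m h1 h2
        rw [← hKiff m h1 h2, Set.mem_insert_iff, or_iff_right (hlv m)])
    have r2 := ih _ hlt2 (X \ side T v c) v (k + 1) j rfl hv hcl2 (fun h => hρ h.1) (by omega)
      (by omega) hj (by
        intro m h1 h2
        rw [Set.mem_diff, hlX m h1 h2, hKiff m h1 h2]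
        omega)
    have hk1X : l (k + 1) ∈ X := (hlX _ (by omega) (by omega)).2 ⟨by omega, by omega⟩
    have hk1K : l (k + 1) ∉ side T v c := hkmax _ (by omega) (by omega)
    have hjK : l j ∉ side T v c := hkmax _ (by omega) (by omega)
    have s1 := (RD.single (ncard_four v (l i) (l k) (l (k + 1)))).glue r1 (by
      intro x hx hx'
      refine ⟨hx, ?_⟩
      rcases hx with rfl | rfl | rfl | rfl
      · simp
      · simp
      · simp
      · exact absurd hx' (by rintro (h | h); exacts [hlv _ h, hk1K h]))
    have s2 := (RD.single (ncard_four v (l i) (l (k + 1)) (l j))).glue r2 (by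
      intro x hx hx'
      refine ⟨hx, ?_⟩
      rcases hx with rfl | rfl | rfl | rfl
      · simp
      · exact absurd hic hx'.2
      · simp
      · simp)
    have s3 := s2.glue s1 (by
      rintro x (hx | hx) (hx' | hx')
      · exact ⟨hx, hx'⟩
      · refine ⟨hx, ?_⟩
        rcases hx with rfl | rfl | rfl | rfl
        · simp
        · simp
        · simp
        · exact absurd hx' (by rintro (h | h); exacts [hlv _ h, hjK h])
      · refine ⟨?_, hx'⟩
        rcases hx' with rfl | rfl | rfl | rfl
        · simp
        · simp
        · exact absurd hkK hx.2
        · simp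
      · rcases hx' with rfl | hx'
        · simp
        · exact absurd hx' hx.2)
    have hXe : (({v, l i, l (k + 1), l j} : Set V) ∪ X \ side T v c) ∪
        (({v, l i, l k, l (k + 1)} : Set V) ∪ insert v (side T v c)) = X := by
      ext x
      constructor
      · rintro (((rfl | rfl | rfl | rfl) | h) | ((rfl | rfl | rfl | rfl) | (rfl | h)))
        · exact hX.1
        · exact hiX
        · exact hk1X
        · exact hjX
        · exact h.1
        · exact hX.1
        · exact hiX
        · exact hsub hkK
        · exact hk1X
        · exact hX.1
        · exact hsub h
      · intro hx
        by_cases h : x ∈ side T v c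
        · exact Or.inr (Or.inr (Or.inr h))
        · exact Or.inl (Or.inr ⟨hx, h⟩)
    rw [hXe] at s3
    have hcross : ∀ a b, a ∈ X → b ∈ X → G.Adj a b → a ∈ side T v c → b ∉ side T v c → b ≠ v →
        a = l k ∧ b = l (k + 1) := by
      intro a b ha hb hab haK hbK hbv
      rw [hG, sup_adj] at hab
      rcases hab with h | h
      · rcases side_step hT hc haK h with h | h
        · exact absurd h hbK
        · exact absurd h.2 hbv
      · obtain ⟨q, hq, rfl⟩ := hl.surj a (hCl _ _ h).1
        obtain ⟨q', hq', rfl⟩ := hl.surj b (hCl _ _ h).2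
        have z1 : 1 ≤ q := by
          by_contra h
          have : q = 0 := by omega
          subst this
          exact hρ ha
        have z2 : 1 ≤ q' := by
          by_contra h
          have : q' = 0 := by omega
          subst this
          exact hρ hb
        have z3 := (hKiff q z1 hq).1 haK
        have z4 := (hlX q' z2 hq').1 hb
        have z5 : k < q' := by
          by_contra h
          exact hbK (hmid q' z4.1 (by omega))
        obtain ⟨r, hr, ⟨x, y⟩ | ⟨x, y⟩⟩ := hl.cadj _ _ h
        · have := hl.inj _ _ hq hr x
          subst this
          have := hl.inj _ _ hq' (by omega) y
          have : q = k := by omega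
          subst this
          exact ⟨rfl, y⟩
        · exfalso
          have := hl.inj _ _ hq' hr x
          subst this
          by_cases e : q' + 1 < n
          · have := hl.inj _ _ hq e y
            omega
          · rw [show q' + 1 = n by omega, hl.closing] at y
            have := hl.inj _ _ hq (by omega) y
            omega
    refine s3.mono ?_ ?_
    · rintro a b ⟨ha, hb, hab⟩
      by_cases haK : a ∈ side T v c <;> by_cases hbK : b ∈ side T v c
      · exact Or.inr (Or.inr ⟨Or.inr haK, Or.inr hbK, hab⟩)
      · by_cases e : b = v
        · exact Or.inr (Or.inr ⟨Or.inr haK, Or.inl e, hab⟩)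
        · obtain ⟨rfl, rfl⟩ := hcross a b ha hb hab haK hbK e
          right; left; simp
      · by_cases e : a = v
        · exact Or.inr (Or.inr ⟨Or.inl e, Or.inr hbK, hab⟩)
        · obtain ⟨rfl, rfl⟩ := hcross b a hb ha hab.symm hbK haK e
          right; left; simp
      · exact Or.inl (Or.inr ⟨⟨ha, haK⟩, ⟨hb, hbK⟩, hab⟩)
    · rintro x (rfl | rfl | rfl) <;> simp

lemma upper_bound {V : Type} [Finite V] {G T C : SimpleGraph V} (hG : G = T ⊔ C)
    (emb : StraightEmbedding G) (hT : T.IsTree) {l : ℕ → V} {n : ℕ} (hl : CycEnum T C l n)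
    {t : V} (hρt : T.Adj (l 0) t) (ht : degB T t ≠ 1) : TreewidthLE G 3 := by
  have h3 := hl.three
  have hne : ∀ a, 1 ≤ a → a < n → l a ≠ l 0 := fun a ha ha' e => by
    have := hl.inj a 0 ha' (by omega) e
    omega
  have h := piece hG emb hT hl hρt ht _ {l 0}ᶜ t 1 (n - 1) rfl ht
    ⟨hρt.ne', fun a ha hat b hab hb => by
      have hb : b = l 0 := hb
      subst hb
      exact hat (leaf_unique (hl.leaf 0) hρt hab.symm).symm⟩
    (by simp) le_rfl (by omega) (by omega) (by
      intro k hk hk'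
      exact ⟨fun _ => ⟨hk, by omega⟩, fun _ => hne k hk hk'⟩)
  have hg := (RD.single (ncard_four (l 0) t (l 1) (l (n - 1)))).glue h (by
    intro x hx hx'
    refine ⟨hx, ?_⟩
    rcases hx with rfl | hx
    · exact absurd rfl hx'
    · exact hx)
  have hX : ({l 0, t, l 1, l (n - 1)} : Set V) ∪ {l 0}ᶜ = Set.univ := by
    ext x
    by_cases e : x = l 0 <;> simp [e]
  rw [hX] at hg
  have h0 : ∀ b, G.Adj (l 0) b → b = t ∨ b = l 1 ∨ b = l (n - 1) := by
    intro b hb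
    rw [hG, sup_adj] at hb
    rcases hb with hb | hb
    · exact Or.inl (leaf_unique (hl.leaf 0) hb hρt)
    · right
      obtain ⟨r, hr, ⟨x, y⟩ | ⟨x, y⟩⟩ := hl.cadj _ _ hb
      · have := hl.inj _ _ (by omega) hr x
        subst this
        exact Or.inl y
      · right
        by_cases e : r + 1 < n
        · exact absurd y.symm (hne _ (by omega) e)
        · rw [x]
          congr 1
          omega
  refine RD.treewidth (hg.mono (B' := ∅) ?_ (Set.empty_subset _))
  intro a b hab
  by_cases ha : a = l 0
  · subst ha
    left
    rcases h0 b hab with rfl | rfl | rfl <;> simp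
  by_cases hb : b = l 0
  · subst hb
    left
    rcases h0 a hab.symm with rfl | rfl | rfl <;> simp
  exact Or.inr ⟨ha, hb, hab⟩

end HalinTW

theorem halin_treewidth_eq_three {V : Type} [Fintype V] (G : SimpleGraph V) (hG : IsHalin G) :
    TreewidthLE G 3 ∧ ¬ TreewidthLE G 2 := by
  obtain ⟨T, C, hT, hcard, hd2, hC2, hC0, hconn, hdisj, hGe, ⟨emb⟩⟩ := hG
  have hne : Nonempty V := hT.1.nonempty
  have hcard' : ∀ s : Set V, s.ncard ≤ 3 → ∃ x, x ∉ s := by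
    intro s hs
    by_contra! hcon
    have : s = Set.univ := Set.eq_univ_of_forall hcon
    rw [this, Set.ncard_univ] at hs
    omega
  have hnbr : ∀ v, ∃ w, T.Adj v w := by
    intro v
    obtain ⟨x, hx⟩ := hcard' {v} (by simp)
    obtain ⟨c, hc, -⟩ := HalinTW.exists_side hT (v := v) (w := x) hx
    exact ⟨c, hc⟩
  constructor
  · obtain ⟨l, n, hl⟩ := HalinTW.exists_enum hC2 hC0 hconn
    obtain ⟨t, ht⟩ := hnbr (l 0)
    refine HalinTW.upper_bound hGe emb hT hl ht fun htl => ?_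
    obtain ⟨x, hx⟩ := hcard' {l 0, t} ((Set.ncard_insert_le _ _).trans (by simp))
    apply hx
    refine HalinTW.conn_ind hT.1 (P := fun x => x ∈ ({l 0, t} : Set V)) (c := t) (by simp) ?_ x
    rintro a b (rfl | rfl) hab
    · right; exact HalinTW.leaf_unique (hl.leaf 0) hab ht
    · left; exact HalinTW.leaf_unique htl hab ht.symm
  · apply HalinTW.lower_bound
    intro v
    have hsub : G.neighborSet v = T.neighborSet v ∪ C.neighborSet v := by
      ext x
      rw [hGe]
      simp
    have hdj : Disjoint (T.neighborSet v) (C.neighborSet v) := by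
      rw [Set.disjoint_left]
      intro x hx hx'
      exact hdisj v x ⟨hx, hx'⟩
    have hsum : degB G v = degB T v + degB C v := by
      unfold degB
      rw [hsub, Set.ncard_union_eq hdj (Set.toFinite _) (Set.toFinite _)]
    have hpos : 0 < degB T v := by
      unfold degB
      rw [Set.ncard_pos (Set.toFinite _)]
      exact hnbr v
    have := hd2 v
    by_cases h1 : degB T v = 1
    · have := hC2 v h1
      omega
    · omega
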